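/- Let p, q ∈ R be idempotents such that p - q is group invertible. Then (p - q)^# = f + g - h. -/

import Mathlib

/-!
With `a = p - q` one has `p * a = a * (1 - q)` and `(1 - q) * a = a * p`. Such a pair of
relations passes from `a` to its group inverse `c`, so `p * c = c * (1 - q)`, and therefore
`p * c + c * p = c * (1 + a)`.
-/

variable {R : Type*} [Ring R]

/-- `c` is a group inverse of `a`. -/
def IsGroupInvOf (a c : R) : Prop := a * c * a = a ∧ c * a * c = c ∧ a * c = c * a

/-- `a` is group invertible. -/
def GroupInvertible (a : R) : Prop := ∃ c, IsGroupInvOf a c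

/-- The group inverse `a^#` (junk value `0` if it does not exist). -/
noncomputable def gi (a : R) : R :=
  haveI := Classical.dec (GroupInvertible a)
  if h : GroupInvertible a then h.choose else 0

/-- The spectral idempotent `a^π = 1 - a * a^#`. -/
noncomputable def sp (a : R) : R := 1 - a * gi a

namespace IsGroupInvOf

variable {a b c d x y : R}

lemma symm (hc : IsGroupInvOf a c) : IsGroupInvOf c a :=
  ⟨hc.2.1, hc.1, hc.2.2.symm⟩

lemma inv_mul_mul_self (hc : IsGroupInvOf a c) : c * a * a = a := by
  rw [← hc.2.2, hc.1]

lemma mul_self_mul_inv (hc : IsGroupInvOf a c) : a * a * c = a := by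
  rw [mul_assoc, hc.2.2, ← mul_assoc, hc.1]

lemma mul_eq_mul_of_intertwine (hc : IsGroupInvOf a c) (hd : IsGroupInvOf b d)
    (hxy : x * a = b * y) (hyx : y * a = b * x) : x * c = d * y := by
  have hacc : a * c * c = c := hc.symm.inv_mul_mul_self
  have hddb : d * d * b = d := hd.symm.mul_self_mul_inv
  have hleft : x * c = d * b * x * c :=
    calc x * c = (x * a) * c * c := by rw [mul_assoc x, mul_assoc x, hacc]
      _ = (d * b * b) * y * c * c := by rw [hxy, hd.inv_mul_mul_self]
      _ = d * b * (x * a) * c * c := by simp only [hxy, mul_assoc]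
      _ = d * b * x * (a * c * c) := by simp only [mul_assoc]
      _ = d * b * x * c := by rw [hacc]
  have hright : d * y = d * b * x * c :=
    calc d * y = d * d * (b * y) := by rw [← mul_assoc, hddb]
      _ = d * d * x * (a * a * c) := by rw [← hxy, hc.mul_self_mul_inv, mul_assoc (d * d)]
      _ = d * d * (x * a) * a * c := by simp only [mul_assoc]
      _ = (d * d * b) * (y * a) * c := by simp only [hxy, mul_assoc]
      _ = d * b * x * c := by rw [hddb, hyx, ← mul_assoc]
  rw [hleft, hright]

end IsGroupInvOf

lemma isGroupInvOf_gi {a : R} (ha : GroupInvertible a) : IsGroupInvOf a (gi a) := by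
  rw [gi, dif_pos ha]
  exact ha.choose_spec

theorem group_inv_eq_f_add_g_sub_h_general {p q : R} (hsq : p * p - q * q = p - q)
    (hpq : GroupInvertible (p - q)) :
    gi (p - q) = p * gi (p - q) + gi (p - q) * p - gi (p - q) * (p - q) := by
  have hc := isGroupInvOf_gi hpq
  have hp : p * (p - q) = (p - q) * (1 - q) :=
    calc p * (p - q) = (p * p - q * q) - (p - q) * q := by noncomm_ring
      _ = (p - q) * (1 - q) := by rw [hsq, mul_one_sub]
  have hq : (1 - q) * (p - q) = (p - q) * p :=
    calc (1 - q) * (p - q) = (p - q) - q * (p - q) := one_sub_mul _ _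
      _ = (p * p - q * q) - q * (p - q) := by rw [hsq]
      _ = (p - q) * p := by noncomm_ring
  rw [hc.mul_eq_mul_of_intertwine hc hp hq]
  noncomm_ring

theorem group_inv_eq_f_add_g_sub_h (p q f g h : R) (hp : p * p = p) (hq : q * q = q)
    (hpq : GroupInvertible (p - q))
    (hf : f = p * gi (p - q)) (hg : g = gi (p - q) * p)
    (hh : h = gi (p - q) * (p - q)) :
    gi (p - q) = f + g - h := by
  subst hf hg hh
  exact group_inv_eq_f_add_g_sub_h_general (by rw [hp, hq]) hpq
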